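/- Let a²,b²,c² > 0 and k ∈ ℤ with |k| ≥ 2. Let u, v : [0,∞) → ℝ with u ∈ C²([0,∞)) ∩ C^∞((0,∞)), v ∈ C^∞([0,∞)), solving on (0,∞) the ODE system u'' + u'/r − k²u/r² = u[−a² + √(2/3)b²v + c²(u²+v²)], v'' + v'/r = v[−a² − (1/√6)b²v + c²(u²+v²)] + (1/√6)b²u², with u(0) = 0, v'(0) = 0, lim_{r→∞} u(r) = s₊/√2, lim_{r→∞} v(r) = −s₊/√6. Define Q : ℝ² → S₀ by Q(x) = u(|x|)·√2(n(x)⊗n(x) − (1/2)I₂) + v(|x|)·√(3/2)(e₃⊗e₃ − (1/3)I₃). Then Q is locally unstable: there exists a smooth compactly supported map P : ℝ² → S₀ such that the second variation L[Q](P) = ∫_{ℝ²} [ (1/2)|∇P|² − (a²/2)|P|² − b²·tr(P²Q) + (c²/2)(|Q|²|P|² + 2(tr(QP))²) ] dx is strictly negative. -/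

import Mathlib

open Real Matrix
open scoped ENNReal

noncomputable section

abbrev Mat3 := Matrix (Fin 3) (Fin 3) ℝ

/-- `Q` is a symmetric traceless 3×3 real matrix, i.e. an element of `S₀`. -/
def isS0 (Q : Mat3) : Prop := Qᵀ = Q ∧ Q.trace = 0

def e1 : Fin 3 → ℝ := ![1, 0, 0]
def e2 : Fin 3 → ℝ := ![0, 1, 0]
def e3 : Fin 3 → ℝ := ![0, 0, 1]

/-- `n(φ) = (cos(kφ/2), sin(kφ/2), 0)`. -/
def nvec (k : ℤ) (φ : ℝ) : Fin 3 → ℝ := ![Real.cos ((k : ℝ) * φ / 2), Real.sin ((k : ℝ) * φ / 2), 0]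

/-- `m(φ) = (−sin(kφ/2), cos(kφ/2), 0)`. -/
def mvec (k : ℤ) (φ : ℝ) : Fin 3 → ℝ := ![-Real.sin ((k : ℝ) * φ / 2), Real.cos ((k : ℝ) * φ / 2), 0]

/-- `I₂ = I₃ − e₃ ⊗ e₃`. -/
def I2 : Mat3 := 1 - vecMulVec e3 e3

def E0 : Mat3 := Real.sqrt (3/2) • (vecMulVec e3 e3 - (1/3 : ℝ) • (1 : Mat3))
def E1 (k : ℤ) (φ : ℝ) : Mat3 :=
  Real.sqrt 2 • (vecMulVec (nvec k φ) (nvec k φ) - (1/2 : ℝ) • I2)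
def E2mat (k : ℤ) (φ : ℝ) : Mat3 :=
  (Real.sqrt 2)⁻¹ • (vecMulVec (nvec k φ) (mvec k φ) + vecMulVec (mvec k φ) (nvec k φ))
def E3mat : Mat3 := (Real.sqrt 2)⁻¹ • (vecMulVec e1 e3 + vecMulVec e3 e1)
def E4mat : Mat3 := (Real.sqrt 2)⁻¹ • (vecMulVec e2 e3 + vecMulVec e3 e2)

/-- The rotation `R_k(ψ)` of winding `k/2` about the vertical axis. -/
def Rk (k : ℤ) (ψ : ℝ) : Mat3 :=
  !![Real.cos ((k : ℝ) * ψ / 2), -Real.sin ((k : ℝ) * ψ / 2), 0;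
     Real.sin ((k : ℝ) * ψ / 2),  Real.cos ((k : ℝ) * ψ / 2), 0;
     0, 0, 1]

/-- The Landau-de Gennes bulk potential. -/
def fbulk (a2 b2 c2 : ℝ) (Q : Mat3) : ℝ :=
  -(a2/2) * (Q*Q).trace - (b2/3) * (Q*Q*Q).trace + (c2/4) * ((Q*Q).trace)^2

/-- The constant `s₊ = (b² + √(b⁴ + 24a²c²))/(4c²)`. -/
def splus (a2 b2 c2 : ℝ) : ℝ := (b2 + Real.sqrt (b2^2 + 24*a2*c2)) / (4*c2)

/-- Laplacian of a scalar function on `ℝ²`, as the sum of the two repeated partial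
derivatives along the coordinate axes. -/
def lap (f : ℝ × ℝ → ℝ) (p : ℝ × ℝ) : ℝ :=
  deriv (fun t => deriv (fun s => f (s, p.2)) t) p.1 +
  deriv (fun t => deriv (fun s => f (p.1, s)) t) p.2

/-- Componentwise Laplacian of a matrix-valued map on `ℝ²`. -/
def matLap (Q : ℝ × ℝ → Mat3) (p : ℝ × ℝ) : Mat3 :=
  Matrix.of fun i j => lap (fun x => Q x i j) p

/-- Squared norm of the gradient of a scalar function on `ℝ²`. -/
def gradNormSq (f : ℝ × ℝ → ℝ) (p : ℝ × ℝ) : ℝ :=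
  (fderiv ℝ f p (1, 0))^2 + (fderiv ℝ f p (0, 1))^2

/-- `|∇Q|²`: sum over all matrix entries of the squared norms of their gradients. -/
def matGradNormSq (Q : ℝ × ℝ → Mat3) (p : ℝ × ℝ) : ℝ :=
  ∑ i, ∑ j, gradNormSq (fun x => Q x i j) p

/-- Membership in the open disk of radius `R ∈ (0,∞]` centered at the origin. -/
def inBall (R : ℝ≥0∞) (x : ℝ × ℝ) : Prop :=
  ENNReal.ofReal (Real.sqrt (x.1^2 + x.2^2)) < R

/-- The right-hand side of the Euler–Lagrange equation
`ΔQ = −a²Q − b²(Q² − (1/3)|Q|²I₃) + c²|Q|²Q`. -/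
def ELrhs (a2 b2 c2 : ℝ) (A : Mat3) : Mat3 :=
  -a2 • A - b2 • (A * A - ((1/3 : ℝ) * (A * A).trace) • (1 : Mat3)) + (c2 * (A * A).trace) • A

/-- Frobenius squared norm of a 3×3 matrix. -/
def frobSq (A : Mat3) : ℝ := ∑ i, ∑ j, (A i j)^2

/-- For `x = (x₁,x₂) ∈ ℝ²`, `x̃ = (x₁,x₂,0) ∈ ℝ³`. -/
def tilde (x : ℝ × ℝ) : Fin 3 → ℝ := ![x.1, x.2, 0]

/-- The projection `P₂(x₁,x₂,x₃) = (x₁,x₂)`. -/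
def P2 (v : Fin 3 → ℝ) : ℝ × ℝ := (v 0, v 1)

/-- The antisymmetric matrix `S₀ = e₂⊗e₁ − e₁⊗e₂`. -/
def S0mat : Mat3 := vecMulVec e2 e1 - vecMulVec e1 e2

end

theorem gradNormSq_polar {h : ℝ × ℝ → ℝ} {r φ A B : ℝ} (hr : 0 < r)
    (hd : DifferentiableAt ℝ h (r * Real.cos φ, r * Real.sin φ))
    (hA : HasDerivAt (fun s => h (s * Real.cos φ, s * Real.sin φ)) A r)
    (hB : HasDerivAt (fun t => h (r * Real.cos t, r * Real.sin t)) B φ) :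
    gradNormSq h (r * Real.cos φ, r * Real.sin φ) = A ^ 2 + B ^ 2 / r ^ 2 := by
  have h1 : HasDerivAt (fun s : ℝ => (s * Real.cos φ, s * Real.sin φ))
      (Real.cos φ, Real.sin φ) r := by
    simpa using ((hasDerivAt_id r).mul_const (Real.cos φ)).prodMk
      ((hasDerivAt_id r).mul_const (Real.sin φ))
  have h2 : HasDerivAt (fun t : ℝ => (r * Real.cos t, r * Real.sin t))
      (r * -Real.sin φ, r * Real.cos φ) φ :=
    ((Real.hasDerivAt_cos φ).const_mul r).prodMk ((Real.hasDerivAt_sin φ).const_mul r)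
  have eA := hA.unique (hd.hasFDerivAt.comp_hasDerivAt r h1)
  have eB := hB.unique (hd.hasFDerivAt.comp_hasDerivAt φ h2)
  set D := fderiv ℝ h (r * Real.cos φ, r * Real.sin φ) with hD
  have key : ∀ a b : ℝ, D (a, b) = a * D (1, 0) + b * D (0, 1) := by
    intro a b
    have : ((a, b) : ℝ × ℝ) = a • (1, 0) + b • (0, 1) := by simp
    rw [this, map_add, map_smul, map_smul, smul_eq_mul, smul_eq_mul]
  rw [key] at eA eB
  rw [gradNormSq, ← hD, eA, eB]
  field_simp
  linear_combination (-(D (1, 0)) ^ 2 - (D (0, 1)) ^ 2) * Real.sin_sq_add_cos_sq φ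

/-- The planar vector `x / |x| + (x / |x|) ^ L`, with `ℝ²` identified with `ℂ`. -/
noncomputable def angular (L : ℕ) (x : ℝ × ℝ) : ℂ :=
  ((⟨x.1, x.2⟩ : ℂ) / (Real.sqrt (x.1 ^ 2 + x.2 ^ 2) : ℂ)) +
    ((⟨x.1, x.2⟩ : ℂ) / (Real.sqrt (x.1 ^ 2 + x.2 ^ 2) : ℂ)) ^ L

theorem sqrt_polar {r : ℝ} (hr : 0 ≤ r) (φ : ℝ) :
    Real.sqrt ((r * Real.cos φ) ^ 2 + (r * Real.sin φ) ^ 2) = r := by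
  rw [show (r * Real.cos φ) ^ 2 + (r * Real.sin φ) ^ 2 = r ^ 2 by
    linear_combination r ^ 2 * Real.sin_sq_add_cos_sq φ, Real.sqrt_sq hr]

theorem angular_polar (L : ℕ) {r : ℝ} (hr : 0 < r) (φ : ℝ) :
    angular L (r * Real.cos φ, r * Real.sin φ) =
      ⟨Real.cos φ + Real.cos (L * φ), Real.sin φ + Real.sin (L * φ)⟩ := by
  have h0 : (r : ℂ) ≠ 0 := by exact_mod_cast hr.ne'
  have hz : (⟨r * Real.cos φ, r * Real.sin φ⟩ : ℂ) / (r : ℂ) =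
      Complex.cos φ + Complex.sin φ * Complex.I := by
    rw [div_eq_iff h0]
    apply Complex.ext <;> simp [← Complex.ofReal_cos, ← Complex.ofReal_sin, mul_comm]
  simp only [angular, sqrt_polar hr.le, hz, Complex.cos_add_sin_mul_I_pow]
  have e : (L : ℂ) * (φ : ℂ) = ((L * φ : ℝ) : ℂ) := by push_cast; ring
  rw [e]
  apply Complex.ext <;> simp [← Complex.ofReal_cos, ← Complex.ofReal_sin, -Complex.ofReal_mul]

theorem sq_add_sq_pos {x : ℝ × ℝ} (hx : x ≠ 0) : 0 < x.1 ^ 2 + x.2 ^ 2 := by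
  by_contra! h
  apply hx
  ext
  · exact pow_eq_zero_iff two_ne_zero |>.1 (le_antisymm (by nlinarith [sq_nonneg x.2]) (sq_nonneg x.1))
  · exact pow_eq_zero_iff two_ne_zero |>.1 (le_antisymm (by nlinarith [sq_nonneg x.1]) (sq_nonneg x.2))

theorem contDiffAt_sqrt_sq_add_sq {x : ℝ × ℝ} (hx : x ≠ 0) :
    ContDiffAt ℝ (⊤ : ℕ∞) (fun x : ℝ × ℝ => Real.sqrt (x.1 ^ 2 + x.2 ^ 2)) x :=
  ContDiffAt.sqrt (by fun_prop) (sq_add_sq_pos hx).ne'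

theorem contDiffAt_angular (L : ℕ) {x : ℝ × ℝ} (hx : x ≠ 0) :
    ContDiffAt ℝ (⊤ : ℕ∞) (angular L) x := by
  have hρ : ContDiffAt ℝ (⊤ : ℕ∞) (fun x : ℝ × ℝ => (Real.sqrt (x.1 ^ 2 + x.2 ^ 2) : ℂ)) x :=
    (Complex.ofRealCLM.contDiff.contDiffAt).comp x (contDiffAt_sqrt_sq_add_sq hx)
  have hz : ContDiffAt ℝ (⊤ : ℕ∞) (fun x : ℝ × ℝ => (⟨x.1, x.2⟩ : ℂ)) x := by
    have : (fun x : ℝ × ℝ => (⟨x.1, x.2⟩ : ℂ)) = fun x : ℝ × ℝ =>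
        Complex.ofRealCLM x.1 + Complex.ofRealCLM x.2 * Complex.I := by
      funext x; apply Complex.ext <;> simp
    rw [this]
    fun_prop
  have hne : (Real.sqrt (x.1 ^ 2 + x.2 ^ 2) : ℂ) ≠ 0 := by
    exact_mod_cast (Real.sqrt_pos.2 (sq_add_sq_pos hx)).ne'
  have hq := hz.mul (hρ.inv hne)
  exact (hq.add (hq.pow L)).congr_of_eventuallyEq
    (.of_forall fun y => by simp [angular, div_eq_mul_inv])

/-- A radial profile vanishing near the origin times a function smooth off the origin. -/
theorem contDiff_radial_mul {f : ℝ → ℝ} {q : ℝ × ℝ → ℝ} {a : ℝ} (ha : 0 < a)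
    (hf : ContDiffOn ℝ (⊤ : ℕ∞) f (Set.Ioi 0)) (hfa : ∀ r, 0 ≤ r → r ≤ a → f r = 0)
    (hq : ∀ x, x ≠ 0 → ContDiffAt ℝ (⊤ : ℕ∞) q x) :
    ContDiff ℝ (⊤ : ℕ∞) (fun x : ℝ × ℝ => f (Real.sqrt (x.1 ^ 2 + x.2 ^ 2)) * q x) := by
  rw [contDiff_iff_contDiffAt]
  intro x
  by_cases hx : x = 0
  · have hc : ContinuousAt (fun x : ℝ × ℝ => Real.sqrt (x.1 ^ 2 + x.2 ^ 2)) x := by fun_prop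
    have h0 : Real.sqrt (x.1 ^ 2 + x.2 ^ 2) < a := by simpa [hx] using ha
    refine (contDiffAt_const (c := (0 : ℝ))).congr_of_eventuallyEq ?_
    filter_upwards [hc.eventually_lt continuousAt_const h0] with y hy
    rw [hfa _ (Real.sqrt_nonneg _) hy.le, zero_mul]
  · have hpos : 0 < Real.sqrt (x.1 ^ 2 + x.2 ^ 2) := Real.sqrt_pos.2 (sq_add_sq_pos hx)
    exact ((hf.contDiffAt (Ioi_mem_nhds hpos)).comp x (contDiffAt_sqrt_sq_add_sq hx)).mul (hq x hx)

theorem E1_eq (k : ℤ) (φ : ℝ) : E1 k φ = (Real.sqrt 2 / 2) •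
    !![Real.cos (k * φ), Real.sin (k * φ), 0; Real.sin (k * φ), -Real.cos (k * φ), 0; 0, 0, 0] := by
  have e : (k : ℝ) * φ = 2 * (k * φ / 2) := by ring
  rw [e, Real.cos_two_mul, Real.sin_two_mul]
  have := Real.sin_sq_add_cos_sq (k * φ / 2)
  ext i j
  fin_cases i <;> fin_cases j <;>
    simp [E1, I2, e3, nvec, vecMulVec]
  · ring
  · ring
  · ring
  · linear_combination Real.sqrt 2 * this

theorem E0_eq : E0 = (1 / Real.sqrt 6) • !![-1, 0, 0; 0, -1, 0; 0, 0, 2] := by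
  have h : Real.sqrt (3 / 2) = 3 * (1 / Real.sqrt 6) := by
    rw [show (3 / 2 : ℝ) = 3 ^ 2 / 6 by norm_num, Real.sqrt_div (by norm_num),
      Real.sqrt_sq (by norm_num)]
    ring
  rw [E0, h]
  ext i j
  fin_cases i <;> fin_cases j <;>
    simp [e3, vecMulVec]
  · ring
  · ring
  · ring

/-- The symmetric traceless matrix `p ⊗ e₃ + e₃ ⊗ p` for `p = (p₁, p₂, 0)`. -/
def tilt (p₁ p₂ : ℝ) : Mat3 := !![0, 0, p₁; 0, 0, p₂; p₁, p₂, 0]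

theorem isS0_tilt (p₁ p₂ : ℝ) : isS0 (tilt p₁ p₂) := by
  constructor
  · ext i j; fin_cases i <;> fin_cases j <;> simp [tilt]
  · simp [tilt, Matrix.trace, Fin.sum_univ_three]

theorem matGradNormSq_tilt (p₁ p₂ : ℝ × ℝ → ℝ) (x : ℝ × ℝ) :
    matGradNormSq (fun x => tilt (p₁ x) (p₂ x)) x =
      2 * (gradNormSq p₁ x + gradNormSq p₂ x) := by
  have h0 : gradNormSq (fun _ => (0 : ℝ)) x = 0 := by simp [gradNormSq]
  simp [matGradNormSq, Fin.sum_univ_three, tilt, h0]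
  ring

/-- The bulk part of the second variation in a tilting direction. -/
theorem bulk_tilt {a2 b2 c2 U V X Y p₁ p₂ : ℝ} (hXY : X ^ 2 + Y ^ 2 = 1)
    (hp : X * (p₁ ^ 2 - p₂ ^ 2) + 2 * Y * (p₁ * p₂) = p₁ ^ 2 + p₂ ^ 2) {A P : Mat3}
    (hA : A = U • ((Real.sqrt 2 / 2) • !![X, Y, 0; Y, -X, 0; 0, 0, 0]) +
      V • ((1 / Real.sqrt 6) • !![-1, 0, 0; 0, -1, 0; 0, 0, 2])) (hP : P = tilt p₁ p₂) :
    -(a2/2) * (P * P).trace - b2 * (P * P * A).trace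
      + c2/2 * ((A * A).trace * (P * P).trace + 2 * ((A * P).trace)^2) =
    (p₁ ^ 2 + p₂ ^ 2) *
      (-a2 - b2 * (U * (Real.sqrt 2 / 2) + V * (1 / Real.sqrt 6)) + c2 * (U ^ 2 + V ^ 2)) := by
  have h2 : Real.sqrt 2 ^ 2 = 2 := Real.sq_sqrt (by norm_num)
  have h6 : (1 / Real.sqrt 6) ^ 2 = 1 / 6 := by
    rw [div_pow, Real.sq_sqrt (by norm_num)]; norm_num
  have hPP : (P * P).trace = 2 * (p₁ ^ 2 + p₂ ^ 2) := by
    simp [hP, tilt, Matrix.trace, Fin.sum_univ_three]; ring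
  have hAP : (A * P).trace = 0 := by
    simp [hP, hA, tilt, Matrix.trace, Fin.sum_univ_three]
  generalize 1 / Real.sqrt 6 = s at *
  have hAA : (A * A).trace = U ^ 2 + V ^ 2 := by
    simp [hA, Matrix.trace, Fin.sum_univ_three]
    linear_combination U ^ 2 * hXY * (Real.sqrt 2 ^ 2 / 2) + U ^ 2 / 2 * h2 + 6 * V ^ 2 * h6
  have hPPA : (P * P * A).trace =
      (p₁ ^ 2 + p₂ ^ 2) * (U * (Real.sqrt 2 / 2) + V * s) := by
    simp [hP, hA, tilt, Matrix.trace, Fin.sum_univ_three]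
    linear_combination U * (Real.sqrt 2 / 2) * hp
  rw [hPP, hAP, hAA, hPPA]
  ring

/-- Logarithmic cutoffs of `ω` make the radial energy negative as soon as the inverse-square
coefficient of the limiting problem is negative. -/
theorem exists_radial_profile {ω u V : ℝ → ℝ} {U κ A B : ℝ}
    (hω : ContDiffOn ℝ (⊤ : ℕ∞) ω (Set.Ioi 0)) (hV : ContinuousOn V (Set.Ioi 0))
    (hode : ∀ r, 0 < r → deriv (deriv ω) r + deriv ω r / r - κ * u r / r ^ 2 = V r * ω r)
    (hωlim : Filter.Tendsto ω Filter.atTop (nhds (2 * U)))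
    (hulim : Filter.Tendsto u Filter.atTop (nhds U))
    (hU : U ≠ 0) (hAB : 2 * B < A * κ) :
    ∃ (f : ℝ → ℝ) (a b : ℝ), 0 < a ∧ a < b ∧ ContDiffOn ℝ (⊤ : ℕ∞) f (Set.Ioi 0) ∧
      (∀ r, 0 ≤ r → r ≤ a → f r = 0) ∧ (∀ r, b ≤ r → f r = 0) ∧
      ∫ r in a..b, (A * (r * deriv f r ^ 2 + r * V r * f r ^ 2) + B * (f r ^ 2 / r)) < 0 := by
  let β : ContDiffBump (0 : ℝ) := ⟨1, 2, by norm_num, by norm_num⟩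
  have hβ : ContDiff ℝ (⊤ : ℕ∞) β := β.contDiff
  have hβd : Differentiable ℝ β := hβ.differentiable (by simp)
  have hβc : Continuous β := hβ.continuous
  have hβ'c : Continuous (deriv β) := hβ.continuous_deriv (by simp)
  have hβ0 : ∀ s : ℝ, 2 ≤ |s| → β s = 0 := fun s hs =>
    β.zero_of_le_dist (by simpa [Real.dist_eq] using hs)
  set I₀ := ∫ s in (-2 : ℝ)..2, β s ^ 2 with hI₀
  set I₁ := ∫ s in (-2 : ℝ)..2, deriv β s ^ 2 with hI₁
  have hI₀pos : 0 < I₀ := by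
    refine intervalIntegral.intervalIntegral_pos_of_pos_on
      ((hβc.pow 2).intervalIntegrable _ _) (fun s hs => ?_) (by norm_num)
    have : 0 < β s := β.pos_of_mem_ball (by
      rw [Metric.mem_ball, Real.dist_eq, sub_zero]
      exact abs_lt.2 hs)
    positivity
  set D := U ^ 2 * (2 * (A * κ) - 4 * B) with hD
  have hDpos : 0 < D := mul_pos (by positivity) (by linarith)
  have lim₁ : Filter.Tendsto (fun r => A * κ * u r * ω r - B * ω r ^ 2) Filter.atTop (nhds D) := by
    have := ((hulim.const_mul (A * κ)).mul hωlim).sub ((hωlim.pow 2).const_mul B)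
    convert this using 2
    rw [hD]; ring
  have lim₂ : Filter.Tendsto (fun r => A * ω r ^ 2) Filter.atTop (nhds (A * (2 * U) ^ 2)) :=
    (hωlim.pow 2).const_mul A
  set M := A * (2 * U) ^ 2 + 1 with hM
  obtain ⟨R, hR⟩ := Filter.eventually_atTop.1
    ((lim₁.eventually_const_lt (half_lt_self hDpos)).and
      (lim₂.eventually_lt_const (lt_add_one _)))
  obtain ⟨T, hTR, hT1, hT⟩ : ∃ T : ℝ, R ≤ Real.exp T ∧ 1 ≤ T ∧ M * I₁ / (D / 2 * I₀) < T :=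
    ((Real.tendsto_exp_atTop.eventually_ge_atTop R).and
      ((Filter.eventually_ge_atTop 1).and (Filter.eventually_gt_atTop _))).exists
  have hT0 : 0 < T := by linarith
  set a := Real.exp T with ha
  set b := Real.exp (5 * T) with hb
  have ha0 : 0 < a := Real.exp_pos _
  have hab : a < b := Real.exp_lt_exp.2 (by linarith)
  set σ : ℝ → ℝ := fun r => Real.log r / T - 3 with hσ
  have hσd : ∀ r, 0 < r → HasDerivAt σ (1 / (T * r)) r := by
    intro r hr
    have := ((Real.hasDerivAt_log hr.ne').div_const T).sub_const 3
    exact this.congr_deriv (by rw [one_div, _root_.mul_inv_rev, div_eq_mul_inv])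
  have hσa : σ a = -2 := by simp only [hσ, ha, Real.log_exp]; field_simp; norm_num
  have hσb : σ b = 2 := by simp only [hσ, hb, Real.log_exp]; field_simp; norm_num
  have hpos : ∀ r ∈ Set.Icc a b, 0 < r := fun r hr => ha0.trans_le hr.1
  have hsub : Set.Icc a b ⊆ Set.Ioi 0 := hpos
  have hu' : Set.uIcc a b = Set.Icc a b := Set.uIcc_of_le hab.le
  -- regularity of `ω`
  have hω' : ContDiffOn ℝ (⊤ : ℕ∞) (deriv ω) (Set.Ioi 0) := hω.deriv_of_isOpen isOpen_Ioi (by simp)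
  have hω'' : ContDiffOn ℝ (⊤ : ℕ∞) (deriv (deriv ω)) (Set.Ioi 0) :=
    hω'.deriv_of_isOpen isOpen_Ioi (by simp)
  have dω : ∀ r, 0 < r → HasDerivAt ω (deriv ω r) r := fun r hr =>
    ((hω.contDiffAt (Ioi_mem_nhds hr)).differentiableAt (by simp)).hasDerivAt
  have dω' : ∀ r, 0 < r → HasDerivAt (deriv ω) (deriv (deriv ω) r) r := fun r hr =>
    ((hω'.contDiffAt (Ioi_mem_nhds hr)).differentiableAt (by simp)).hasDerivAt
  have dη : ∀ r, 0 < r → HasDerivAt (fun r => β (σ r)) (deriv β (σ r) * (1 / (T * r))) r :=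
    fun r hr => (hβd (σ r)).hasDerivAt.comp r (hσd r hr)
  have df : ∀ r, 0 < r → HasDerivAt (fun r => ω r * β (σ r))
      (deriv ω r * β (σ r) + ω r * (deriv β (σ r) * (1 / (T * r)))) r :=
    fun r hr => (dω r hr).mul (dη r hr)
  have cσ : ContinuousOn σ (Set.Icc a b) := fun r hr =>
    (hσd r (hpos r hr)).continuousAt.continuousWithinAt
  have cω := hω.continuousOn.mono hsub
  have cω' := hω'.continuousOn.mono hsub
  have cω'' := hω''.continuousOn.mono hsub
  have cV := hV.mono hsub
  have cβ : ContinuousOn (fun r => β (σ r)) (Set.Icc a b) := hβc.comp_continuousOn cσ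
  have cβ' : ContinuousOn (fun r => deriv β (σ r)) (Set.Icc a b) := hβ'c.comp_continuousOn cσ
  have cinv : ContinuousOn (fun r : ℝ => r⁻¹) (Set.Icc a b) :=
    continuousOn_inv₀.mono fun r hr => (hpos r hr).ne'
  have cinv' : ContinuousOn (fun r : ℝ => 1 / (T * r)) (Set.Icc a b) := by
    simp only [one_div, mul_inv]; fun_prop
  refine ⟨fun r => ω r * β (σ r), a, b, ha0, hab, ?_, ?_, ?_, ?_⟩
  · refine hω.mul (hβ.comp_contDiffOn ?_)
    exact ((Real.contDiffOn_log.mono (fun r hr => ne_of_gt hr)).div_const T).sub contDiffOn_const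
  · intro r hr hra
    rcases hr.eq_or_lt with rfl | hr
    · change ω 0 * β (Real.log 0 / T - 3) = 0
      rw [hβ0 _ (by rw [Real.log_zero]; norm_num), mul_zero]
    · have : Real.log r ≤ T := by rw [← Real.log_exp T]; exact Real.log_le_log hr hra
      have h1 : Real.log r / T ≤ 1 := (div_le_one hT0).2 this
      change ω r * β (Real.log r / T - 3) = 0
      rw [hβ0 _ (by rw [le_abs]; right; linarith), mul_zero]
  · intro r hbr
    have : 5 * T ≤ Real.log r := by
      rw [← Real.log_exp (5 * T)]; exact Real.log_le_log (Real.exp_pos _) hbr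
    have h1 : 5 ≤ Real.log r / T := (le_div_iff₀ hT0).2 this
    change ω r * β (Real.log r / T - 3) = 0
    rw [hβ0 _ (by rw [le_abs]; left; linarith), mul_zero]
  · set G : ℝ → ℝ := fun r => r * (ω r * deriv ω r * β (σ r) ^ 2) with hG
    set G' : ℝ → ℝ := fun r => 1 * (ω r * deriv ω r * β (σ r) ^ 2) +
      r * ((deriv ω r * deriv ω r + ω r * deriv (deriv ω) r) * β (σ r) ^ 2 +
        ω r * deriv ω r * (2 * β (σ r) * (deriv β (σ r) * (1 / (T * r))))) with hG'
    have dG : ∀ r, 0 < r → HasDerivAt G (G' r) r := by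
      intro r hr
      have := (hasDerivAt_id r).mul
        (((dω r hr).mul (dω' r hr)).mul ((dη r hr).pow 2))
      exact this.congr_deriv (by simp [hG'])
    set J : ℝ → ℝ := fun s => M / T * deriv β s ^ 2 - D / 2 * T * β s ^ 2 with hJ
    have hJc : Continuous J := by fun_prop
    have cG' : ContinuousOn G' (Set.Icc a b) := by fun_prop
    have cJ : ContinuousOn (fun r => J (σ r) * (1 / (T * r))) (Set.Icc a b) :=
      (hJc.comp_continuousOn cσ).mul cinv'
    have hGint : ∫ r in a..b, G' r = 0 := by
      rw [intervalIntegral.integral_eq_sub_of_hasDerivAt (f := G)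
        (fun r hr => dG r (hpos r (hu' ▸ hr))) ((hu'.symm ▸ cG').intervalIntegrable)]
      simp [hG, hσa, hσb, hβ0]
    have hJint : ∫ r in a..b, J (σ r) * (1 / (T * r)) = M / T * I₁ - D / 2 * T * I₀ := by
      have := intervalIntegral.integral_comp_mul_deriv (f := σ) (f' := fun r => 1 / (T * r)) (g := J)
        (a := a) (b := b) (fun r hr => hσd r (hpos r (hu' ▸ hr))) (hu'.symm ▸ cinv') hJc
      simp only [Function.comp_def] at this
      rw [this, hσa, hσb, hJ, intervalIntegral.integral_sub, intervalIntegral.integral_const_mul,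
        intervalIntegral.integral_const_mul]
      · exact (Continuous.intervalIntegrable (by fun_prop) _ _)
      · exact (Continuous.intervalIntegrable (by fun_prop) _ _)
    have hneg : M / T * I₁ - D / 2 * T * I₀ < 0 := by
      rw [div_lt_iff₀ (by positivity)] at hT
      have h1 : M / T * I₁ = M * I₁ / T := by ring
      rw [h1, sub_neg, div_lt_iff₀ hT0]
      nlinarith [mul_pos (mul_pos hDpos hI₀pos) hT0]
    calc ∫ r in a..b, (A * (r * deriv (fun r => ω r * β (σ r)) r ^ 2
            + r * V r * (ω r * β (σ r)) ^ 2) + B * ((ω r * β (σ r)) ^ 2 / r))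
        ≤ ∫ r in a..b, (A * G' r + J (σ r) * (1 / (T * r))) := by
          refine intervalIntegral.integral_mono_on hab.le ?_ ?_ ?_
          · refine ContinuousOn.intervalIntegrable (hu'.symm ▸ ?_)
            have : ContinuousOn (deriv (fun r => ω r * β (σ r))) (Set.Icc a b) :=
              ContinuousOn.congr (f := fun r =>
                deriv ω r * β (σ r) + ω r * (deriv β (σ r) * (1 / (T * r)))) (by fun_prop)
                fun r hr => (df r (hpos r hr)).deriv
            simp only [div_eq_mul_inv]
            fun_prop
          · exact ContinuousOn.intervalIntegrable (hu'.symm ▸ by fun_prop)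
          · intro r hr
            have hr0 := hpos r hr
            obtain ⟨h1, h2⟩ := hR r (hTR.trans hr.1)
            have h3 := hode r hr0
            rw [(df r hr0).deriv]
            simp only [hG', hJ]
            generalize deriv β (σ r) = y
            generalize β (σ r) = x
            have h4 : r * V r * (ω r * x) ^ 2 = x ^ 2 * (r * ω r * deriv (deriv ω) r +
                ω r * deriv ω r - κ * u r * ω r / r) := by
              have : r * V r * (ω r * x) ^ 2 = r * x ^ 2 * ω r * (V r * ω r) := by ring
              rw [this, ← h3]
              field_simp
            rw [h4, ← sub_nonneg]
            have h5 : 0 ≤ (M - A * ω r ^ 2) * (y ^ 2 / (T ^ 2 * r)) +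
                (A * κ * u r * ω r - B * ω r ^ 2 - D / 2) * (x ^ 2 / r) :=
              add_nonneg (mul_nonneg (by linarith) (by positivity))
                (mul_nonneg (by linarith) (by positivity))
            refine h5.trans_eq ?_
            field_simp
            ring
      _ = M / T * I₁ - D / 2 * T * I₀ := by
          rw [intervalIntegral.integral_add, intervalIntegral.integral_const_mul, hGint, hJint]
          · ring
          · exact ContinuousOn.intervalIntegrable (hu'.symm ▸ by fun_prop)
          · exact ContinuousOn.intervalIntegrable (hu'.symm ▸ cJ)
      _ < 0 := hneg

theorem integral_cos_natCast_mul_nonneg (n : ℕ) :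
    0 ≤ ∫ φ in -π..π, Real.cos (n * φ) := by
  rcases Nat.eq_zero_or_pos n with rfl | hn
  · simp [Real.pi_pos.le]
  · have hn' : (n : ℝ) ≠ 0 := by positivity
    rw [intervalIntegral.integral_comp_mul_left (fun x => Real.cos x) hn', integral_cos]
    simp [Real.sin_nat_mul_pi]

theorem gradNormSq_of_separated {h : ℝ × ℝ → ℝ} {f g : ℝ → ℝ} {r φ f' g' : ℝ} (hr : 0 < r)
    (hh : ∀ s t, 0 < s → h (s * Real.cos t, s * Real.sin t) = f s * g t)
    (hd : DifferentiableAt ℝ h (r * Real.cos φ, r * Real.sin φ))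
    (hf : HasDerivAt f f' r) (hg : HasDerivAt g g' φ) :
    gradNormSq h (r * Real.cos φ, r * Real.sin φ) = (f' * g φ) ^ 2 + (f r * g') ^ 2 / r ^ 2 := by
  refine gradNormSq_polar hr hd ((hf.mul_const (g φ)).congr_of_eventuallyEq ?_) ?_
  · filter_upwards [Ioi_mem_nhds hr] with s hs using hh s φ hs
  · simpa only [hh r _ hr] using hg.const_mul (f r)

/-- The integral of a sum of two separated functions in polar coordinates. -/
theorem integral_of_separated_polar {F : ℝ × ℝ → ℝ} {R₁ R₂ Φ₁ Φ₂ : ℝ → ℝ} {a b : ℝ}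
    (ha : 0 < a) (hab : a ≤ b)
    (hF : ∀ r φ, 0 < r → r * F (r * Real.cos φ, r * Real.sin φ) = R₁ r * Φ₁ φ + R₂ r * Φ₂ φ)
    (hR₁ : ContinuousOn R₁ (Set.Icc a b)) (hR₂ : ContinuousOn R₂ (Set.Icc a b))
    (hz₁ : ∀ r, 0 < r → r ∉ Set.Icc a b → R₁ r = 0) (hz₂ : ∀ r, 0 < r → r ∉ Set.Icc a b → R₂ r = 0)
    (hΦ₁ : Continuous Φ₁) (hΦ₂ : Continuous Φ₂) :
    ∫ x, F x = ∫ r in a..b, ((∫ φ in -π..π, Φ₁ φ) * R₁ r + (∫ φ in -π..π, Φ₂ φ) * R₂ r) := by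
  have hsub : Set.Icc a b ⊆ Set.Ioi 0 := fun r hr => ha.trans_le hr.1
  have hint : ∀ R : ℝ → ℝ, ContinuousOn R (Set.Icc a b) →
      (∀ r, 0 < r → r ∉ Set.Icc a b → R r = 0) → MeasureTheory.IntegrableOn R (Set.Ioi 0) :=
    fun R hR hz => hR.integrableOn_Icc.of_forall_sdiff_eq_zero measurableSet_Ioi
      fun r hr => hz r hr.1 hr.2
  have heq : ∀ R : ℝ → ℝ, (∀ r, 0 < r → r ∉ Set.Icc a b → R r = 0) →
      ∫ r in Set.Ioi 0, R r = ∫ r in a..b, R r := by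
    intro R hz
    rw [MeasureTheory.setIntegral_eq_of_subset_of_forall_sdiff_eq_zero measurableSet_Ioi hsub
      (fun r hr => hz r hr.1 hr.2), MeasureTheory.integral_Icc_eq_integral_Ioc,
      intervalIntegral.integral_of_le hab]
  have hang : ∀ Φ : ℝ → ℝ, ∫ φ in Set.Ioo (-π) π, Φ φ = ∫ φ in -π..π, Φ φ := by
    intro Φ
    rw [intervalIntegral.integral_of_le (by linarith [Real.pi_pos]),
      MeasureTheory.integral_Ioc_eq_integral_Ioo]
  have hΦint : ∀ Φ : ℝ → ℝ, Continuous Φ → MeasureTheory.IntegrableOn Φ (Set.Ioo (-π) π) :=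
    fun Φ hΦ => hΦ.integrableOn_Icc.mono_set Set.Ioo_subset_Icc_self
  have hmeas : MeasurableSet polarCoord.target := polarCoord.open_target.measurableSet
  have hcongr : Set.EqOn (fun p : ℝ × ℝ => p.1 • F (polarCoord.symm p))
      (fun p => R₁ p.1 * Φ₁ p.2 + R₂ p.1 * Φ₂ p.2) polarCoord.target :=
    fun p hp => hF p.1 p.2 hp.1
  rw [← integral_comp_polarCoord_symm F, MeasureTheory.setIntegral_congr_fun hmeas
    hcongr,
    polarCoord_target, MeasureTheory.Measure.volume_eq_prod, ← MeasureTheory.Measure.prod_restrict,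
    MeasureTheory.integral_add ((hint R₁ hR₁ hz₁).mul_prod (hΦint Φ₁ hΦ₁))
      ((hint R₂ hR₂ hz₂).mul_prod (hΦint Φ₂ hΦ₂)),
    MeasureTheory.integral_prod_mul, MeasureTheory.integral_prod_mul,
    heq R₁ hz₁, heq R₂ hz₂, hang, hang, intervalIntegral.integral_add,
    intervalIntegral.integral_const_mul, intervalIntegral.integral_const_mul]
  · ring
  · exact ((Set.uIcc_of_le hab).symm ▸ hR₁).intervalIntegrable.const_mul _
  · exact ((Set.uIcc_of_le hab).symm ▸ hR₂).intervalIntegrable.const_mul _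

/-- The difference of the in-plane and vertical eigenvalues solves the linear equation
satisfied by tilting perturbations, up to the term coming from the winding of the director. -/
theorem ode_eigenvalue_gap {a2 b2 c2 κ : ℝ} {u v : ℝ → ℝ}
    (huS : ContDiffOn ℝ (⊤ : ℕ∞) u (Set.Ioi 0)) (hvS : ContDiffOn ℝ (⊤ : ℕ∞) v (Set.Ioi 0))
    (hode : ∀ r : ℝ, 0 < r →
      (deriv (deriv u) r + deriv u r / r - κ * u r / r^2 =
        u r * (-a2 + Real.sqrt (2/3) * b2 * v r + c2 * ((u r)^2 + (v r)^2))) ∧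
      (deriv (deriv v) r + deriv v r / r =
        v r * (-a2 - (1 / Real.sqrt 6) * b2 * v r + c2 * ((u r)^2 + (v r)^2))
          + (1 / Real.sqrt 6) * b2 * (u r)^2)) {r : ℝ} (hr : 0 < r) :
    deriv (deriv fun r => u r - Real.sqrt 3 * v r) r + deriv (fun r => u r - Real.sqrt 3 * v r) r / r
        - κ * u r / r ^ 2 =
      (-a2 - b2 * (u r * (Real.sqrt 2 / 2) + v r * (1 / Real.sqrt 6)) + c2 * (u r ^ 2 + v r ^ 2)) *
        (u r - Real.sqrt 3 * v r) := by
  have diff : ∀ {w : ℝ → ℝ}, ContDiffOn ℝ (⊤ : ℕ∞) w (Set.Ioi 0) → ∀ s, 0 < s →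
      HasDerivAt w (deriv w s) s := fun hw s hs =>
    ((hw.contDiffAt (Ioi_mem_nhds hs)).differentiableAt (by simp)).hasDerivAt
  have hu' : ContDiffOn ℝ (⊤ : ℕ∞) (deriv u) (Set.Ioi 0) := huS.deriv_of_isOpen isOpen_Ioi (by simp)
  have hv' : ContDiffOn ℝ (⊤ : ℕ∞) (deriv v) (Set.Ioi 0) := hvS.deriv_of_isOpen isOpen_Ioi (by simp)
  have d1 : ∀ s, 0 < s → deriv (fun r => u r - Real.sqrt 3 * v r) s =
      deriv u s - Real.sqrt 3 * deriv v s := fun s hs =>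
    ((diff huS s hs).sub ((diff hvS s hs).const_mul _)).deriv
  have d2 : deriv (deriv fun r => u r - Real.sqrt 3 * v r) r =
      deriv (deriv u) r - Real.sqrt 3 * deriv (deriv v) r := by
    have : (deriv fun r => u r - Real.sqrt 3 * v r) =ᶠ[nhds r]
        fun s => deriv u s - Real.sqrt 3 * deriv v s := by
      filter_upwards [Ioi_mem_nhds hr] with s hs using d1 s hs
    rw [this.deriv_eq]
    exact ((diff hu' r hr).sub ((diff hv' r hr).const_mul _)).deriv
  obtain ⟨h1, h2⟩ := hode r hr
  have s3 : Real.sqrt 3 ^ 2 = 3 := Real.sq_sqrt (by norm_num)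
  have s2 : Real.sqrt 2 ^ 2 = 2 := Real.sq_sqrt (by norm_num)
  have p2 : 0 < Real.sqrt 2 := by positivity
  have p3 : 0 < Real.sqrt 3 := by positivity
  have e6 : 1 / Real.sqrt 6 = Real.sqrt 2 * Real.sqrt 3 / 6 := by
    rw [show (6 : ℝ) = 2 * 3 by norm_num, Real.sqrt_mul (by norm_num)]
    field_simp
    rw [s2, s3]
  have e23 : Real.sqrt (2 / 3) = Real.sqrt 2 * Real.sqrt 3 / 3 := by
    rw [Real.sqrt_div (by norm_num)]
    field_simp
    rw [s3]
  rw [e6] at h2 ⊢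
  rw [e23] at h1
  rw [d2, d1 r hr]
  linear_combination h1 - Real.sqrt 3 * h2 - s3 * (b2 * Real.sqrt 2 * u r ^ 2 / 6)

theorem exists_sign_mul_natCast_add_two {k : ℤ} (hk : 2 ≤ |k|) :
    ∃ (N : ℕ) (σ : ℝ), σ ^ 2 = 1 ∧ (k : ℝ) = σ * (N + 2) ∧ (σ = 1 ∨ σ = -1) := by
  obtain ⟨N, hN⟩ := Int.le.dest hk
  rcases abs_choice k with h | h <;> rw [h] at hN
  · exact ⟨N, 1, by norm_num, by rw [← hN]; push_cast; ring, Or.inl rfl⟩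
  · refine ⟨N, -1, by norm_num, ?_, Or.inr rfl⟩
    have : (2 : ℝ) + N = -k := by exact_mod_cast hN
    linarith

/-- instability of `k`-radially symmetric solutions for `|k| ≥ 2`: there is a
smooth compactly supported perturbation `P` with negative second variation. -/
theorem stmt13 (a2 b2 c2 : ℝ) (ha : 0 < a2) (hb : 0 < b2) (hc : 0 < c2)
    (k : ℤ) (hk : 2 ≤ |k|)
    (u v : ℝ → ℝ)
    (hu2 : ContDiffOn ℝ 2 u (Set.Ici 0)) (huS : ContDiffOn ℝ (⊤ : ℕ∞) u (Set.Ioi 0))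
    (hvS : ContDiffOn ℝ (⊤ : ℕ∞) v (Set.Ici 0))
    (hode : ∀ r : ℝ, 0 < r →
      (deriv (deriv u) r + deriv u r / r - (k : ℝ)^2 * u r / r^2 =
        u r * (-a2 + Real.sqrt (2/3) * b2 * v r + c2 * ((u r)^2 + (v r)^2))) ∧
      (deriv (deriv v) r + deriv v r / r =
        v r * (-a2 - (1 / Real.sqrt 6) * b2 * v r + c2 * ((u r)^2 + (v r)^2))
          + (1 / Real.sqrt 6) * b2 * (u r)^2))
    (hu0 : u 0 = 0) (hv'0 : derivWithin v (Set.Ici 0) 0 = 0)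
    (hulim : Filter.Tendsto u Filter.atTop (nhds (splus a2 b2 c2 / Real.sqrt 2)))
    (hvlim : Filter.Tendsto v Filter.atTop (nhds (-(splus a2 b2 c2) / Real.sqrt 6)))
    (Q : ℝ × ℝ → Mat3)
    (hQ : ∀ r φ : ℝ, 0 ≤ r →
      Q (r * Real.cos φ, r * Real.sin φ) = u r • E1 k φ + v r • E0) :
    ∃ P : ℝ × ℝ → Mat3,
      (∀ x, isS0 (P x)) ∧
      (∀ i j, ContDiff ℝ (⊤ : ℕ∞) (fun x => P x i j)) ∧
      HasCompactSupport P ∧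
      (∫ x : ℝ × ℝ,
        ((1/2) * matGradNormSq P x - a2/2 * (P x * P x).trace
          - b2 * (P x * P x * Q x).trace
          + c2/2 * ((Q x * Q x).trace * (P x * P x).trace + 2 * ((Q x * P x).trace)^2))) < 0 := by
  obtain ⟨N, σ, hσ2, hkN, hσ⟩ := exists_sign_mul_natCast_add_two hk
  have huc := huS.continuousOn
  have hvS' : ContDiffOn ℝ (⊤ : ℕ∞) v (Set.Ioi 0) := hvS.mono Set.Ioi_subset_Ici_self
  have hvc := hvS'.continuousOn
  set L : ℕ := N + 1 with hL
  have hLN : (L : ℝ) = N + 1 := by rw [hL]; push_cast; ring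
  set V : ℝ → ℝ := fun r =>
    -a2 - b2 * (u r * (Real.sqrt 2 / 2) + v r * (1 / Real.sqrt 6)) + c2 * (u r ^ 2 + v r ^ 2) with hV
  set Φ₁ : ℝ → ℝ := fun φ => 2 + 2 * Real.cos (N * φ) with hΦ₁
  set Φ₂ : ℝ → ℝ := fun φ => 1 + (L : ℝ) ^ 2 + 2 * L * Real.cos (N * φ) with hΦ₂
  have hspos : 0 < splus a2 b2 c2 := by unfold splus; positivity
  have hωlim : Filter.Tendsto (fun r => u r - Real.sqrt 3 * v r) Filter.atTop
      (nhds (2 * (splus a2 b2 c2 / Real.sqrt 2))) := by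
    have := hulim.sub (hvlim.const_mul (Real.sqrt 3))
    convert this using 2
    rw [show (6 : ℝ) = 2 * 3 by norm_num, Real.sqrt_mul (by norm_num)]
    have : 0 < Real.sqrt 3 := by positivity
    field_simp
    ring
  have hAB : 2 * (∫ φ in -π..π, Φ₂ φ) < (∫ φ in -π..π, Φ₁ φ) * (k : ℝ) ^ 2 := by
    have hc : IntervalIntegrable (fun φ : ℝ => Real.cos (N * φ)) MeasureTheory.volume (-π) π :=
      Continuous.intervalIntegrable (by fun_prop) _ _
    have h1 : ∫ φ in -π..π, Φ₁ φ = 4 * π + 2 * ∫ φ in -π..π, Real.cos (N * φ) := by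
      rw [hΦ₁, intervalIntegral.integral_add (by simp) (hc.const_mul _),
        intervalIntegral.integral_const_mul, intervalIntegral.integral_const, smul_eq_mul]
      ring
    have h2 : ∫ φ in -π..π, Φ₂ φ =
        2 * π * (1 + (L : ℝ) ^ 2) + 2 * L * ∫ φ in -π..π, Real.cos (N * φ) := by
      rw [hΦ₂, intervalIntegral.integral_add (by simp) (hc.const_mul _),
        intervalIntegral.integral_const_mul, intervalIntegral.integral_const, smul_eq_mul]
      ring
    have h3 := integral_cos_natCast_mul_nonneg N
    rw [h1, h2, hkN, mul_pow, hσ2, hLN]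
    have hN0 : (0 : ℝ) ≤ N := N.cast_nonneg
    have h4 : 0 ≤ (∫ φ in -π..π, Real.cos (N * φ)) * (2 * ((N : ℝ) + 1) ^ 2 + 2) := by positivity
    have h5 : 0 < π * ((N : ℝ) + 1) := by positivity
    nlinarith
  obtain ⟨f, a, b, ha0, hab, hfS, hfa, hfb, hneg⟩ := exists_radial_profile
    (huS.sub (contDiffOn_const.mul hvS')) (V := V) (by fun_prop)
    (fun r hr => ode_eigenvalue_gap huS hvS' hode hr) hωlim hulim
    (by positivity) hAB
  have hfd : ∀ r, 0 < r → HasDerivAt f (deriv f r) r := fun r hr =>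
    ((hfS.contDiffAt (Ioi_mem_nhds hr)).differentiableAt (by simp)).hasDerivAt
  have hsub : Set.Icc a b ⊆ Set.Ioi 0 := fun r hr => ha0.trans_le hr.1
  have hf0 : ∀ r, 0 < r → r ∉ Set.Icc a b → f r = 0 := fun r hr hrn => by
    rcases lt_or_ge r a with h | h
    · exact hfa r hr.le h.le
    · exact hfb r (le_of_not_ge fun h' => hrn ⟨h, h'⟩)
  have hf'0 : ∀ r, 0 < r → r ∉ Set.Icc a b → deriv f r = 0 := fun r hr hrn => by
    have : f =ᶠ[nhds r] fun _ => 0 := by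
      filter_upwards [isClosed_Icc.isOpen_compl.mem_nhds hrn, Ioi_mem_nhds hr] with s hs hs0
        using hf0 s hs0 hs
    simpa using this.deriv_eq
  set p₁ : ℝ × ℝ → ℝ := fun x =>
    f (Real.sqrt (x.1 ^ 2 + x.2 ^ 2)) * (angular L x).re with hp₁
  set p₂ : ℝ × ℝ → ℝ := fun x =>
    f (Real.sqrt (x.1 ^ 2 + x.2 ^ 2)) * (σ * (angular L x).im) with hp₂
  have hp₁S : ContDiff ℝ (⊤ : ℕ∞) p₁ := contDiff_radial_mul ha0 hfS hfa fun x hx =>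
    Complex.reCLM.contDiff.contDiffAt.comp x (contDiffAt_angular L hx)
  have hp₂S : ContDiff ℝ (⊤ : ℕ∞) p₂ := contDiff_radial_mul ha0 hfS hfa fun x hx =>
    contDiffAt_const.mul (Complex.imCLM.contDiff.contDiffAt.comp x (contDiffAt_angular L hx))
  have hp₁p : ∀ s t, 0 < s → p₁ (s * Real.cos t, s * Real.sin t) =
      f s * (Real.cos t + Real.cos (L * t)) := fun s t hs => by
    simp only [hp₁, angular_polar L hs, sqrt_polar hs.le]
  have hp₂p : ∀ s t, 0 < s → p₂ (s * Real.cos t, s * Real.sin t) =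
      f s * (σ * (Real.sin t + Real.sin (L * t))) := fun s t hs => by
    simp only [hp₂, angular_polar L hs, sqrt_polar hs.le]
  refine ⟨fun x => tilt (p₁ x) (p₂ x), fun x => isS0_tilt _ _, fun i j => ?_, ?_, ?_⟩
  · fin_cases i <;> fin_cases j <;> simp [tilt, hp₁S, hp₂S, contDiff_const]
  · refine HasCompactSupport.intro (isCompact_closedBall 0 b) fun x hx => ?_
    have hb : b ≤ Real.sqrt (x.1 ^ 2 + x.2 ^ 2) := by
      rw [mem_closedBall_zero_iff, not_le, Prod.norm_def, lt_max_iff] at hx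
      rcases hx with hx | hx
      · exact hx.le.trans (Real.abs_le_sqrt (by nlinarith [sq_nonneg x.2]))
      · exact hx.le.trans (Real.abs_le_sqrt (by nlinarith [sq_nonneg x.1]))
    have h1 : p₁ x = 0 := by simp only [hp₁, hfb _ hb, zero_mul]
    have h2 : p₂ x = 0 := by simp only [hp₂, hfb _ hb, zero_mul]
    ext i j
    fin_cases i <;> fin_cases j <;> simp [tilt, h1, h2]
  · have cf := hfS.continuousOn.mono hsub
    have cf' := (hfS.continuousOn_deriv_of_isOpen isOpen_Ioi (by simp)).mono hsub
    have cV : ContinuousOn V (Set.Icc a b) :=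
      ContinuousOn.mono (s := Set.Ioi 0) (by fun_prop) hsub
    have cinv : ContinuousOn (fun r : ℝ => r⁻¹) (Set.Icc a b) :=
      continuousOn_inv₀.mono fun r hr => (hsub hr).ne'
    rw [integral_of_separated_polar (R₁ := fun r => r * deriv f r ^ 2 + r * V r * f r ^ 2)
      (R₂ := fun r => f r ^ 2 / r) (Φ₁ := Φ₁) (Φ₂ := Φ₂) ha0 hab.le]
    · exact hneg
    · intro r φ hr
      have g₁ := gradNormSq_of_separated (φ := φ) hr hp₁p (hp₁S.differentiable (by simp) _)
        (hfd r hr) ((Real.hasDerivAt_cos φ).add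
          ((Real.hasDerivAt_cos (L * φ)).comp φ ((hasDerivAt_id φ).const_mul (L : ℝ))))
      have g₂ := gradNormSq_of_separated (φ := φ) hr hp₂p (hp₂S.differentiable (by simp) _)
        (hfd r hr) (((Real.hasDerivAt_sin φ).add
          ((Real.hasDerivAt_sin (L * φ)).comp φ ((hasDerivAt_id φ).const_mul (L : ℝ)))).const_mul σ)
      have hQ' := hQ r φ hr.le
      rw [E1_eq, E0_eq] at hQ'
      set x : ℝ × ℝ := (r * Real.cos φ, r * Real.sin φ) with hx
      have e1 : p₁ x = f r * (Real.cos φ + Real.cos (L * φ)) := hp₁p r φ hr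
      have e2 : p₂ x = f r * (σ * (Real.sin φ + Real.sin (L * φ))) := hp₂p r φ hr
      have n₁ := Real.sin_sq_add_cos_sq φ
      have n₂ := Real.sin_sq_add_cos_sq (L * φ)
      have hN : Real.cos (N * φ) =
          Real.cos (L * φ) * Real.cos φ + Real.sin (L * φ) * Real.sin φ := by
        rw [← Real.cos_sub, hLN]; congr 1; ring
      have hsum : φ + L * φ = (N + 2) * φ := by rw [hLN]; ring
      have hck : Real.cos (k * φ) =
          Real.cos φ * Real.cos (L * φ) - Real.sin φ * Real.sin (L * φ) := by
        rw [← Real.cos_add, hsum, hkN]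
        rcases hσ with rfl | rfl
        · rw [one_mul]
        · rw [← Real.cos_neg]; congr 1; ring
      have hsk : Real.sin (k * φ) =
          σ * (Real.sin φ * Real.cos (L * φ) + Real.cos φ * Real.sin (L * φ)) := by
        rw [← Real.sin_add, hsum, hkN]
        rcases hσ with rfl | rfl
        · rw [one_mul, one_mul]
        · rw [show -1 * ((N : ℝ) + 2) * φ = -((N + 2) * φ) by ring, Real.sin_neg]; ring
      have hbulk := bulk_tilt (a2 := a2) (b2 := b2) (c2 := c2) (p₁ := p₁ x) (p₂ := p₂ x)
        (Real.cos_sq_add_sin_sq (k * φ)) (by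
          rw [hck, hsk, e1, e2]
          generalize Real.cos (L * φ) = C at *
          generalize Real.sin (L * φ) = S at *
          generalize Real.cos φ = c at *
          generalize Real.sin φ = s at *
          linear_combination f r ^ 2 * ((c * C + s * S + S ^ 2 + C ^ 2) * n₁
            + (c * C + s * S + s ^ 2 + c ^ 2) * n₂) + f r ^ 2 *
            (2 * (s * C + c * S) * (c + C) * (s + S) - (c * C - s * S) * (s + S) ^ 2
              - (s + S) ^ 2) * hσ2) hQ' rfl
      rw [matGradNormSq_tilt]
      have hV' : V r = -a2 - b2 * (u r * (Real.sqrt 2 / 2) + v r * (1 / Real.sqrt 6))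
        + c2 * (u r ^ 2 + v r ^ 2) := rfl
      rw [← hV'] at hbulk
      have key : r * (1 / 2 * (2 * (gradNormSq p₁ x + gradNormSq p₂ x))
            + V r * (p₁ x ^ 2 + p₂ x ^ 2)) =
          (r * deriv f r ^ 2 + r * V r * f r ^ 2) * Φ₁ φ + f r ^ 2 / r * Φ₂ φ := by
        rw [g₁, g₂, e1, e2]
        simp only [hΦ₁, hΦ₂, hN]
        generalize V r = W
        generalize deriv f r = f'
        generalize f r = F
        generalize Real.cos (L * φ) = C at *
        generalize Real.sin (L * φ) = S at *
        generalize Real.cos φ = c at *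
        generalize Real.sin φ = s at *
        generalize (L : ℝ) = l at *
        field_simp
        linear_combination (r ^ 2 * (f' ^ 2 + W * F ^ 2) * (s + S) ^ 2 + F ^ 2 * (c + C * l) ^ 2) * hσ2
          + (r ^ 2 * (f' ^ 2 + W * F ^ 2) + F ^ 2) * n₁
          + (r ^ 2 * (f' ^ 2 + W * F ^ 2) + F ^ 2 * l ^ 2) * n₂
      rw [← key]
      linear_combination r * hbulk
    · fun_prop
    · simp only [div_eq_mul_inv]; fun_prop
    · intro r hr hrn; simp only [hf0 r hr hrn, hf'0 r hr hrn]; ring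
    · intro r hr hrn; simp only [hf0 r hr hrn]; ring
    · fun_prop
    · fun_prop
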